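/- Let G be a graph on n vertices with adjacency matrix A and stability number α(G), and let k > 0 be a noninteger real scalar. Then the quartic form p_{A,k}(x) := (x²)^T (kA + kI - J) (x²) has a strict local minimizer over ℝ^n if and only if α(G) < k; moreover, when α(G) < k, the origin is a strict local minimizer of p_{A,k}. -/

import Mathlib

open Matrix
open scoped RealInnerProductSpace

/-- The stability (independence) number of a graph: the size of the largest set of
pairwise non-adjacent vertices. -/
noncomputable def stabilityNumber {V : Type*} (G : SimpleGraph V) : ℕ :=
  sSup {k | ∃ s : Finset V, s.card = k ∧ ∀ i ∈ s, ∀ j ∈ s, i ≠ j → ¬ G.Adj i j}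

/-- The matrix `M_{A,k} = k A + k I - J`, where `J` is the all-ones matrix. -/
noncomputable def MAk {n : ℕ} (A : Matrix (Fin n) (Fin n) ℝ) (k : ℝ) : Matrix (Fin n) (Fin n) ℝ :=
  k • A + k • (1 : Matrix (Fin n) (Fin n) ℝ) - Matrix.of (fun _ _ => (1 : ℝ))

/-- Entrywise square of a vector. -/
def vsq {n : ℕ} (x : Fin n → ℝ) : Fin n → ℝ := fun i => (x i) ^ 2

/-- A symmetric matrix `M` is copositive if `xᵀ M x ≥ 0` for all entrywise nonnegative `x`. -/
def Copositive {n : ℕ} (M : Matrix (Fin n) (Fin n) ℝ) : Prop :=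
  ∀ x : Fin n → ℝ, (∀ i, 0 ≤ x i) → 0 ≤ x ⬝ᵥ M.mulVec x

/-- The quartic form `p_M(x) = (x²)ᵀ M (x²)`. -/
noncomputable def quarticForm {n : ℕ} (M : Matrix (Fin n) (Fin n) ℝ) :
    EuclideanSpace ℝ (Fin n) → ℝ :=
  fun x => vsq x ⬝ᵥ M.mulVec (vsq x)

/-- The quadratic form `q_M(x) = xᵀ M x`. -/
noncomputable def quadForm {n : ℕ} (M : Matrix (Fin n) (Fin n) ℝ) :
    EuclideanSpace ℝ (Fin n) → ℝ :=
  fun x => x ⬝ᵥ M.mulVec x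

/-- `xm` is a local minimizer of `f` over `Ω`: `xm ∈ Ω` and there is `ε > 0` such that
`f xm ≤ f x` for all `x ∈ Ω` with `‖x - xm‖ ≤ ε` (Euclidean norm). -/
def IsLocalMinimizer {n : ℕ} (f : EuclideanSpace ℝ (Fin n) → ℝ)
    (Ω : Set (EuclideanSpace ℝ (Fin n))) (xm : EuclideanSpace ℝ (Fin n)) : Prop :=
  xm ∈ Ω ∧ ∃ ε > 0, ∀ x ∈ Ω, ‖x - xm‖ ≤ ε → f xm ≤ f x

/-- `xm` is a strict local minimizer of `f` over `Ω`: `xm ∈ Ω` and there is `ε > 0` such that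
`f xm < f x` for all `x ∈ Ω` with `x ≠ xm` and `‖x - xm‖ ≤ ε` (Euclidean norm). -/
def IsStrictLocalMinimizer {n : ℕ} (f : EuclideanSpace ℝ (Fin n) → ℝ)
    (Ω : Set (EuclideanSpace ℝ (Fin n))) (xm : EuclideanSpace ℝ (Fin n)) : Prop :=
  xm ∈ Ω ∧ ∃ ε > 0, ∀ x ∈ Ω, x ≠ xm → ‖x - xm‖ ≤ ε → f xm < f x

/-!
A homogeneous function of nonzero degree restricted to the ray through a point `x ≠ 0` is
monotone near `x`, so its only possible strict local minimizer is the origin, and the origin is one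
exactly when the function is positive elsewhere. It remains to see that the form with matrix
`k(A + I) - J` is positive on nonzero nonnegative vectors `y` exactly when `α(G) < k`. Indicator
vectors of stable sets give one direction. The other is the Motzkin–Straus inequality
`(∑ᵢ yᵢ)² ≤ α(G) yᵀ(A + I)y`: along `eᵢ - eⱼ` with `i` and `j` adjacent the form `yᵀ(A + I)y` is
affine, so weight can be moved from `j` to `i` or back without increasing it, until the support is
stable, where the inequality is Cauchy–Schwarz.
-/

open Filter Topology

section Homogeneous

variable {E : Type*} [AddCommGroup E] [Module ℝ E] [TopologicalSpace E] [ContinuousSMul ℝ E]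
  {f : E → ℝ} {d : ℕ}

theorem tendsto_smul_const_nhdsNE (t : ℝ) {x : E} (hx : x ≠ 0) :
    Tendsto (fun s : ℝ ↦ s • x) (𝓝[≠] t) (𝓝[≠] (t • x)) :=
  ((continuous_id.smul continuous_const).tendsto t).inf
    (tendsto_principal_principal.2 fun _ hs ↦ (smul_left_injective ℝ hx).ne hs)

theorem eq_zero_of_homogeneous_of_strictLocalMin (hd : d ≠ 0)
    (hf : ∀ c : ℝ, 0 < c → ∀ x, f (c • x) = c ^ d * f x) {x : E}
    (hmin : ∀ᶠ y in 𝓝[≠] x, f x < f y) : x = 0 := by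
  by_contra hx
  have hray : ∀ᶠ t : ℝ in 𝓝[≠] 1, f x < t ^ d * f x := by
    have htendsto := tendsto_smul_const_nhdsNE 1 hx
    rw [one_smul] at htendsto
    filter_upwards [htendsto.eventually hmin,
      mem_nhdsWithin_of_mem_nhds (lt_mem_nhds one_pos)] with t ht ht₀
    rwa [← hf t ht₀]
  have hpos : 0 < f x := by
    obtain ⟨t, ht, ht₁ : 1 < t⟩ :=
      ((hray.filter_mono (nhdsGT_le_nhdsNE 1)).and self_mem_nhdsWithin).exists
    have := one_lt_pow₀ ht₁ hd
    nlinarith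
  obtain ⟨t, ht, ht₀, ht₁⟩ :=
    ((hray.filter_mono (nhdsLT_le_nhdsNE 1)).and (Ioo_mem_nhdsLT one_pos)).exists
  exact ht.not_ge (mul_le_of_le_one_left hpos.le (pow_le_one₀ ht₀.le ht₁.le))

theorem strictLocalMin_zero_iff_forall_pos_of_homogeneous (hd : d ≠ 0)
    (hf : ∀ c : ℝ, 0 < c → ∀ x, f (c • x) = c ^ d * f x) :
    (∀ᶠ y in 𝓝[≠] 0, f 0 < f y) ↔ ∀ x, x ≠ 0 → 0 < f x := by
  have hzero : f 0 = 0 := by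
    have htwo := hf 2 two_pos 0
    rw [smul_zero] at htwo
    exact eq_zero_of_mul_eq_self_left (one_lt_pow₀ one_lt_two hd).ne' htwo.symm
  rw [hzero]
  refine ⟨fun hmin x hx ↦ ?_, fun hpos ↦ eventually_nhdsWithin_of_forall hpos⟩
  have htendsto := tendsto_smul_const_nhdsNE 0 hx
  rw [zero_smul] at htendsto
  obtain ⟨t, ht, ht₀ : 0 < t⟩ :=
    (((htendsto.eventually hmin).filter_mono (nhdsGT_le_nhdsNE 0)).and
      self_mem_nhdsWithin).exists
  rw [hf t ht₀] at ht
  exact pos_of_mul_pos_right ht (pow_nonneg ht₀.le d)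

end Homogeneous

section MoveWeight

variable {V R : Type*} [DecidableEq V]

/-- The weighting `y` with the whole weight of `j` transferred to `i`. It is meant for `j ≠ i`, and
written as a displacement along `eᵢ - eⱼ` so that quadratic forms expand along it. -/
def moveWeight [Ring R] (y : V → R) (j i : V) : V → R :=
  y + y j • (Pi.single i 1 - Pi.single j 1)

variable [Ring R] {y : V → R} {i j : V}

theorem moveWeight_apply_self (y : V → R) (hji : j ≠ i) : moveWeight y j i j = 0 := by
  simp [moveWeight, hji]

theorem moveWeight_apply_of_ne (y : V → R) (i : V) {l : V} (hlj : l ≠ j) :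
    moveWeight y j i l = y l + y j * Pi.single (M := fun _ ↦ R) i 1 l := by
  simp [moveWeight, hlj]

theorem sum_moveWeight [Fintype V] (y : V → R) (j i : V) :
    ∑ l, moveWeight y j i l = ∑ l, y l := by
  simp [moveWeight, Finset.sum_add_distrib, ← Finset.mul_sum]

theorem moveWeight_nonneg [PartialOrder R] [IsOrderedRing R] (hy : 0 ≤ y) (hji : j ≠ i) :
    0 ≤ moveWeight y j i := fun l ↦ by
  rcases eq_or_ne l j with rfl | hlj
  · exact (moveWeight_apply_self y hji).ge
  · rw [moveWeight_apply_of_ne y i hlj]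
    refine add_nonneg (hy l) (mul_nonneg (hy j) ?_)
    exact (Pi.single_nonneg.2 zero_le_one : 0 ≤ (Pi.single i 1 : V → R)) l

theorem support_moveWeight_subset_erase {s : Finset V} (hys : Function.support y ⊆ s)
    (hi : i ∈ s) (hji : j ≠ i) : Function.support (moveWeight y j i) ⊆ s.erase j := by
  refine Function.support_subset_iff'.2 fun l hl ↦ ?_
  rcases eq_or_ne l j with rfl | hlj
  · exact moveWeight_apply_self y hji
  · have hls : l ∉ s := fun h ↦ hl (Finset.mem_coe.2 (Finset.mem_erase.2 ⟨hlj, h⟩))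
    have hli : l ≠ i := fun h ↦ hls (h ▸ hi)
    rw [moveWeight_apply_of_ne y i hlj, Function.support_subset_iff'.1 hys l hls,
      Pi.single_eq_of_ne hli, mul_zero, add_zero]

end MoveWeight

section MotzkinStraus

variable {V R : Type*} [Fintype V]

theorem dotProduct_mulVec_comm_of_isSymm [CommSemiring R] {B : Matrix V V R} (hB : B.IsSymm)
    (v w : V → R) : v ⬝ᵥ B *ᵥ w = w ⬝ᵥ B *ᵥ v := by
  rw [dotProduct_mulVec, ← mulVec_transpose, hB.eq, dotProduct_comm]

variable [DecidableEq V]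

theorem dotProduct_mulVec_add_smul_single_sub_single [CommRing R] {B : Matrix V V R}
    (hB : B.IsSymm) (y : V → R) (i j : V) (t : R) :
    (y + t • (Pi.single i 1 - Pi.single j 1)) ⬝ᵥ
        B *ᵥ (y + t • (Pi.single i 1 - Pi.single j 1)) =
      y ⬝ᵥ B *ᵥ y + 2 * t * ((B *ᵥ y) i - (B *ᵥ y) j) +
        t ^ 2 * (B i i + B j j - 2 * B i j) := by
  set d : V → R := Pi.single i 1 - Pi.single j 1 with hd
  have hlin : d ⬝ᵥ B *ᵥ y = (B *ᵥ y) i - (B *ᵥ y) j := by simp [hd, sub_dotProduct]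
  have hquad : d ⬝ᵥ B *ᵥ d = B i i + B j j - 2 * B i j := by
    simp only [hd, sub_dotProduct, mulVec_sub, dotProduct_sub, single_one_dotProduct,
      mulVec_single_one, col_apply, hB.apply i j]
    ring
  simp only [mulVec_add, mulVec_smul, add_dotProduct, dotProduct_add, smul_dotProduct,
    dotProduct_smul, smul_eq_mul, dotProduct_mulVec_comm_of_isSymm hB y d, hlin, hquad]
  ring

variable (G : SimpleGraph V) [DecidableRel G.Adj]

theorem dotProduct_adjMatrix_add_one_mulVec_of_isIndepSet [Semiring R] {y : V → R}
    (hy : G.IsIndepSet (Function.support y)) :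
    y ⬝ᵥ (G.adjMatrix R + 1) *ᵥ y = ∑ i, y i ^ 2 := by
  rw [add_mulVec, one_mulVec, dotProduct]
  refine Finset.sum_congr rfl fun i _ ↦ ?_
  by_cases hi : y i = 0
  · simp [hi]
  have hnbhd : ∑ j ∈ G.neighborFinset i, y j = 0 := by
    refine Finset.sum_eq_zero fun j hj ↦ ?_
    rw [SimpleGraph.mem_neighborFinset] at hj
    by_contra hj₀
    exact hy hi hj₀ hj.ne hj
  rw [Pi.add_apply, SimpleGraph.adjMatrix_mulVec_apply, hnbhd, zero_add, sq]

theorem sum_sq_le_dotProduct_adjMatrix_add_one_mulVec [Semiring R] [PartialOrder R]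
    [IsOrderedRing R] {y : V → R} (hy : 0 ≤ y) :
    ∑ i, y i ^ 2 ≤ y ⬝ᵥ (G.adjMatrix R + 1) *ᵥ y := by
  have hadj : 0 ≤ G.adjMatrix R *ᵥ y := fun i ↦ by
    rw [SimpleGraph.adjMatrix_mulVec_apply]
    exact Finset.sum_nonneg fun j _ ↦ hy j
  have hself : y ⬝ᵥ y = ∑ i, y i ^ 2 := by simp only [dotProduct, sq]
  rw [add_mulVec, dotProduct_add, one_mulVec, hself]
  exact le_add_of_nonneg_left (dotProduct_nonneg_of_nonneg hy hadj)

variable [CommRing R] [LinearOrder R] [IsStrictOrderedRing R] {y : V → R}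

theorem exists_support_subset_erase_of_not_isIndepSet (hy : 0 ≤ y) {s : Finset V}
    (hys : Function.support y ⊆ s) (hs : ¬ G.IsIndepSet s) :
    ∃ j ∈ s, ∃ z : V → R, 0 ≤ z ∧ Function.support z ⊆ s.erase j ∧ ∑ i, z i = ∑ i, y i ∧
      z ⬝ᵥ (G.adjMatrix R + 1) *ᵥ z ≤ y ⬝ᵥ (G.adjMatrix R + 1) *ᵥ y := by
  set B := G.adjMatrix R + 1 with hB
  obtain ⟨i, hi, j, hj, hij, hle⟩ :
      ∃ i ∈ s, ∃ j ∈ s, G.Adj i j ∧ (B *ᵥ y) i ≤ (B *ᵥ y) j := by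
    simp only [SimpleGraph.isIndepSet_iff, Set.Pairwise, not_forall, not_not] at hs
    obtain ⟨i, hi, j, hj, -, hij⟩ := hs
    rcases le_total ((B *ᵥ y) i) ((B *ᵥ y) j) with hle | hle
    · exact ⟨i, hi, j, hj, hij, hle⟩
    · exact ⟨j, hj, i, hi, hij.symm, hle⟩
  have hform : moveWeight y j i ⬝ᵥ B *ᵥ moveWeight y j i =
      y ⬝ᵥ B *ᵥ y + 2 * y j * ((B *ᵥ y) i - (B *ᵥ y) j) := by
    have hflat : B i i + B j j - 2 * B i j = 0 := by
      simp [hB, hij, hij.ne, one_add_one_eq_two]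
    have hBsymm : B.IsSymm := G.isSymm_adjMatrix.add isSymm_one
    rw [moveWeight, dotProduct_mulVec_add_smul_single_sub_single hBsymm, hflat, mul_zero,
      add_zero]
  refine ⟨j, hj, moveWeight y j i, moveWeight_nonneg hy hij.symm.ne,
    support_moveWeight_subset_erase hys hi hij.symm.ne, sum_moveWeight y j i, ?_⟩
  rw [hform]
  exact add_le_of_nonpos_right
    (mul_nonpos_of_nonneg_of_nonpos (mul_nonneg zero_le_two (hy j)) (sub_nonpos.2 hle))

theorem sq_sum_le_indepNum_mul_of_isIndepSet_support
    (hy : G.IsIndepSet (Function.support y)) :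
    (∑ i, y i) ^ 2 ≤ G.indepNum * y ⬝ᵥ (G.adjMatrix R + 1) *ᵥ y := by
  set s : Finset V := {i | y i ≠ 0} with hs
  have hcard : s.card ≤ G.indepNum :=
    SimpleGraph.IsIndepSet.card_le_indepNum (by simpa [hs, Function.support] using hy)
  rw [dotProduct_adjMatrix_add_one_mulVec_of_isIndepSet G hy]
  calc (∑ i, y i) ^ 2 = (∑ i ∈ s, y i) ^ 2 := by rw [hs, Finset.sum_filter_ne_zero]
    _ ≤ s.card * ∑ i ∈ s, y i ^ 2 := sq_sum_le_card_mul_sum_sq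
    _ ≤ G.indepNum * ∑ i, y i ^ 2 := by
      gcongr
      exact s.subset_univ

/-- The **Motzkin–Straus inequality**. -/
theorem sq_sum_le_indepNum_mul_dotProduct_adjMatrix_add_one_mulVec (hy : 0 ≤ y) :
    (∑ i, y i) ^ 2 ≤ G.indepNum * y ⬝ᵥ (G.adjMatrix R + 1) *ᵥ y := by
  suffices ∀ s : Finset V, Function.support y ⊆ s →
      (∑ i, y i) ^ 2 ≤ G.indepNum * y ⬝ᵥ (G.adjMatrix R + 1) *ᵥ y from
    this Finset.univ (by simp)
  intro s hys
  induction s using Finset.strongInduction generalizing y with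
  | H s ih =>
    by_cases hs : G.IsIndepSet s
    · exact sq_sum_le_indepNum_mul_of_isIndepSet_support G (hs.mono hys)
    · obtain ⟨j, hj, z, hz, hzs, hsum, hle⟩ :=
        exists_support_subset_erase_of_not_isIndepSet G hy hys hs
      rw [← hsum]
      exact (ih _ (Finset.erase_ssubset hj) hz hzs).trans (by gcongr)

end MotzkinStraus

theorem stabilityNumber_eq_indepNum {V : Type*} (G : SimpleGraph V) :
    stabilityNumber G = G.indepNum := by
  simp [stabilityNumber, SimpleGraph.indepNum, SimpleGraph.isNIndepSet_iff, Set.Pairwise,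
    and_comm]

section QuarticForm

variable {n : ℕ}

theorem isStrictLocalMinimizer_univ_iff {f : EuclideanSpace ℝ (Fin n) → ℝ}
    {x : EuclideanSpace ℝ (Fin n)} :
    IsStrictLocalMinimizer f Set.univ x ↔ ∀ᶠ y in 𝓝[≠] x, f x < f y := by
  rw [(nhdsWithin_hasBasis Metric.nhds_basis_closedBall _).eventually_iff]
  simp only [IsStrictLocalMinimizer, Set.mem_univ, true_and, forall_const, Set.mem_inter_iff,
    Metric.mem_closedBall, dist_eq_norm, Set.mem_compl_singleton_iff, and_imp, gt_iff_lt]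
  exact exists_congr fun ε ↦ and_congr_right fun _ ↦ forall_congr' fun y ↦ forall_comm

theorem quarticForm_smul (M : Matrix (Fin n) (Fin n) ℝ) (c : ℝ)
    (x : EuclideanSpace ℝ (Fin n)) : quarticForm M (c • x) = c ^ 4 * quarticForm M x := by
  have hvsq : vsq (c • x : EuclideanSpace ℝ (Fin n)) = c ^ 2 • vsq x := by
    ext i
    simp [vsq, mul_pow]
  simp only [quarticForm, hvsq, mulVec_smul, dotProduct_smul, smul_dotProduct, smul_eq_mul]
  ring

theorem dotProduct_MAk_mulVec (A : Matrix (Fin n) (Fin n) ℝ) (k : ℝ) (y : Fin n → ℝ) :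
    y ⬝ᵥ MAk A k *ᵥ y = k * y ⬝ᵥ (A + 1) *ᵥ y - (∑ i, y i) ^ 2 := by
  have hones : Matrix.of (fun _ _ : Fin n ↦ (1 : ℝ)) *ᵥ y = fun _ ↦ ∑ i, y i := by
    ext i
    simp [mulVec, dotProduct]
  rw [MAk, ← smul_add, sub_mulVec, hones, smul_mulVec, dotProduct_sub, dotProduct_smul,
    smul_eq_mul]
  simp [dotProduct, ← Finset.sum_mul, sq]

variable (G : SimpleGraph (Fin n)) [DecidableRel G.Adj] {k : ℝ}

theorem quarticForm_MAk_indicator_of_isIndepSet {s : Finset (Fin n)} (hs : G.IsIndepSet s) :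
    quarticForm (MAk (G.adjMatrix ℝ) k) (WithLp.toLp 2 (Set.indicator s 1)) =
      s.card * (k - s.card) := by
  have hvsq : vsq (Set.indicator (s : Set (Fin n)) (1 : Fin n → ℝ)) = Set.indicator s 1 := by
    ext i
    by_cases hi : i ∈ s <;> simp [vsq, hi]
  have hsum : ∑ i, Set.indicator (s : Set (Fin n)) (1 : Fin n → ℝ) i = s.card := by
    simp [Set.indicator_apply]
  have hsum_sq : ∑ i, Set.indicator (s : Set (Fin n)) (1 : Fin n → ℝ) i ^ 2 = s.card := by
    rw [← hsum]
    exact Finset.sum_congr rfl fun i _ ↦ congrFun hvsq i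
  rw [quarticForm, hvsq, dotProduct_MAk_mulVec,
    dotProduct_adjMatrix_add_one_mulVec_of_isIndepSet G (hs.mono Set.support_indicator_subset),
    hsum, hsum_sq]
  ring

theorem card_lt_of_quarticForm_MAk_pos
    (hpos : ∀ x, x ≠ 0 → 0 < quarticForm (MAk (G.adjMatrix ℝ) k) x) {s : Finset (Fin n)}
    (hs : G.IsIndepSet s) (hne : s.Nonempty) : (s.card : ℝ) < k := by
  have hind : WithLp.toLp 2 (Set.indicator (s : Set (Fin n)) (1 : Fin n → ℝ)) ≠ 0 := by
    obtain ⟨i, hi⟩ := hne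
    intro h
    simpa [hi] using congrFun (congrArg WithLp.ofLp h) i
  have hlt := hpos _ hind
  rw [quarticForm_MAk_indicator_of_isIndepSet G hs] at hlt
  exact sub_pos.1 (pos_of_mul_pos_right hlt s.card.cast_nonneg)

theorem quarticForm_MAk_pos (hk : (stabilityNumber G : ℝ) < k) {x : EuclideanSpace ℝ (Fin n)}
    (hx : x ≠ 0) : 0 < quarticForm (MAk (G.adjMatrix ℝ) k) x := by
  have hnonneg : 0 ≤ vsq x := fun i ↦ sq_nonneg (x i)
  have hform : 0 < vsq x ⬝ᵥ (G.adjMatrix ℝ + 1) *ᵥ vsq x := by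
    obtain ⟨i, hi⟩ : ∃ i, x i ≠ 0 := by
      by_contra! h
      exact hx (PiLp.ext h)
    refine lt_of_lt_of_le ?_ (sum_sq_le_dotProduct_adjMatrix_add_one_mulVec G hnonneg)
    exact Finset.sum_pos' (fun _ _ ↦ sq_nonneg _)
      ⟨i, Finset.mem_univ i, by simp only [vsq]; positivity⟩
  rw [quarticForm, dotProduct_MAk_mulVec, sub_pos]
  rw [stabilityNumber_eq_indepNum] at hk
  exact (sq_sum_le_indepNum_mul_dotProduct_adjMatrix_add_one_mulVec G hnonneg).trans_lt
    (mul_lt_mul_of_pos_right hk hform)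

theorem quarticForm_MAk_pos_iff (hk : n = 0 → 0 < k) :
    (∀ x, x ≠ 0 → 0 < quarticForm (MAk (G.adjMatrix ℝ) k) x) ↔ (stabilityNumber G : ℝ) < k := by
  refine ⟨fun hpos ↦ ?_, fun h x hx ↦ quarticForm_MAk_pos G h hx⟩
  rw [stabilityNumber_eq_indepNum]
  obtain ⟨s, hs, hcard⟩ := G.exists_isNIndepSet_indepNum
  rw [← hcard]
  rcases s.eq_empty_or_nonempty with rfl | hne
  · suffices n = 0 by simpa using hk this
    by_contra hn
    have : NeZero n := ⟨hn⟩
    have hsingle : ({0} : Finset (Fin n)).card ≤ G.indepNum :=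
      SimpleGraph.IsIndepSet.card_le_indepNum (by simp)
    simp [← hcard] at hsingle
  · exact card_lt_of_quarticForm_MAk_pos G hpos hs hne

end QuarticForm

theorem pAk_has_strictLocalMinimizer_iff_general {n : ℕ} (G : SimpleGraph (Fin n))
    [DecidableRel G.Adj] (k : ℝ) (hk : n = 0 → 0 < k) :
    ((∃ xm, IsStrictLocalMinimizer (quarticForm (MAk (G.adjMatrix ℝ) k)) Set.univ xm) ↔
        (stabilityNumber G : ℝ) < k) ∧
    ((stabilityNumber G : ℝ) < k →
        IsStrictLocalMinimizer (quarticForm (MAk (G.adjMatrix ℝ) k)) Set.univ 0) := by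
  set p := quarticForm (MAk (G.adjMatrix ℝ) k)
  have hhom : ∀ c : ℝ, 0 < c → ∀ x, p (c • x) = c ^ 4 * p x := fun c _ ↦ quarticForm_smul _ c
  have hzero : IsStrictLocalMinimizer p Set.univ 0 ↔ (stabilityNumber G : ℝ) < k := by
    rw [isStrictLocalMinimizer_univ_iff,
      strictLocalMin_zero_iff_forall_pos_of_homogeneous four_ne_zero hhom,
      quarticForm_MAk_pos_iff G hk]
  refine ⟨⟨fun ⟨xm, hxm⟩ ↦ ?_, fun h ↦ ⟨0, hzero.2 h⟩⟩, hzero.2⟩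
  obtain rfl : xm = 0 := eq_zero_of_homogeneous_of_strictLocalMin four_ne_zero hhom
    (isStrictLocalMinimizer_univ_iff.1 hxm)
  exact hzero.1 hxm

/-- For `k > 0` noninteger, the quartic form `p_{A,k}` has a strict local minimizer over `ℝⁿ`
iff `α(G) < k`; moreover, when `α(G) < k` the origin is a strict local minimizer. -/
theorem pAk_has_strictLocalMinimizer_iff {n : ℕ} (G : SimpleGraph (Fin n)) [DecidableRel G.Adj]
    (k : ℝ) (hk : 0 < k) (hk' : ∀ m : ℤ, (m : ℝ) ≠ k) :
    ((∃ xm, IsStrictLocalMinimizer (quarticForm (MAk (G.adjMatrix ℝ) k)) Set.univ xm) ↔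
        (stabilityNumber G : ℝ) < k) ∧
    ((stabilityNumber G : ℝ) < k →
        IsStrictLocalMinimizer (quarticForm (MAk (G.adjMatrix ℝ) k)) Set.univ 0) :=
  pAk_has_strictLocalMinimizer_iff_general G k fun _ ↦ hk
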